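/- (Burillo–Cleary–Stein–Taback) There is a sequence (c_n)_{n≥1} of elements of Thompson's group T such that c_n has order exactly n and every torsion element of T is conjugate in T to a power of c_n for some n: for every f in T of finite order there exist a positive integer n and an integer k with f conjugate in T to c_n^k. -/

import Mathlib

open Set

/-- The group of self-homeomorphisms of a topological space,
with `(f * g) x = f (g x)`. -/
instance homeomorphGroup (X : Type*) [TopologicalSpace X] : Group (X ≃ₜ X) where
  mul f g := g.trans f
  one := Homeomorph.refl X
  inv := Homeomorph.symm
  mul_assoc _ _ _ := Homeomorph.ext fun _ => rfl
  one_mul _ := Homeomorph.ext fun _ => rfl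
  mul_one _ := Homeomorph.ext fun _ => rfl
  inv_mul_cancel a := Homeomorph.ext fun x => a.symm_apply_apply x

/-- A real number is a dyadic rational if it has the form `a / 2 ^ b`. -/
def IsDyadic (x : ℝ) : Prop := ∃ a : ℤ, ∃ b : ℕ, x = (a : ℝ) / 2 ^ b

/-- A point of the circle `ℝ/ℤ` is dyadic if it is the image of a dyadic rational. -/
def IsDyadicPt (x : AddCircle (1:ℝ)) : Prop :=
  ∃ r : ℝ, IsDyadic r ∧ (r : AddCircle (1:ℝ)) = x

/-- `F : ℝ → ℝ` is a lift of the circle map `f` if `F (x+1) = F x + 1` and the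
reduction of `F` modulo 1 is `f`. -/
def IsLiftOf (f : AddCircle (1:ℝ) ≃ₜ AddCircle (1:ℝ)) (F : ℝ → ℝ) : Prop :=
  (∀ x : ℝ, F (x + 1) = F x + 1) ∧
  ∀ x : ℝ, f (x : AddCircle (1:ℝ)) = ((F x : ℝ) : AddCircle (1:ℝ))

/-- A self-homeomorphism of the circle `ℝ/ℤ` belongs to Thompson's group `T` iff it maps
the set of dyadic points onto itself and has an increasing lift `F : ℝ → ℝ` that is
piecewise linear with respect to a finite dyadic partition `0 = t 0 < ⋯ < t m = 1`,
every slope being an integer power of `2` and every breakpoint `(t i, F (t i))`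
having dyadic rational coordinates. -/
def InThompsonT (f : AddCircle (1:ℝ) ≃ₜ AddCircle (1:ℝ)) : Prop :=
  (∀ x, IsDyadicPt x ↔ IsDyadicPt (f x)) ∧
  ∃ F : ℝ → ℝ, StrictMono F ∧ IsLiftOf f F ∧
    ∃ m : ℕ, ∃ t : Fin (m + 1) → ℝ,
      StrictMono t ∧ t 0 = 0 ∧ t (Fin.last m) = 1 ∧
      (∀ i, IsDyadic (t i) ∧ IsDyadic (F (t i))) ∧
      ∀ i : Fin m, ∃ k : ℤ, ∃ c : ℝ,
        ∀ x ∈ Icc (t i.castSucc) (t i.succ), F x = (2 : ℝ) ^ k * x + c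

open Filter Topology Function

/-!
Everything happens on the lifts to the line, where the unit translation `z` generates the kernel of
the projection to the circle and torsion disappears. A lift `F` of a torsion element of order `n`
satisfies `F ^ n = z ^ k`; as the lifts have no torsion, `k` is prime to `n`, so Bézout makes `F` a
power of an `n`-th root `u` of `z`. It remains to see that `z` has `n`-th roots among the lifts of
elements of `T`, and that any two are conjugate. Both follow from one fact about the larger group of
all dyadic piecewise linear homeomorphisms of the line: in it, every element `v` moving all points
to the right is conjugate to `z`, because a map from `[0, 1]` onto a fundamental domain `[0, v 0]`
extends equivariantly. Conjugating `z ^ n` to `z` turns `z` into an `n`-th root of `z`; and the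
conjugator obtained between two `n`-th roots of `z` also commutes with their common `n`-th power
`z`, hence descends to the circle.
-/

namespace IsDyadic

variable {x y : ℝ}

protected lemma intCast (n : ℤ) : IsDyadic n := ⟨n, 0, by simp⟩

protected lemma zero : IsDyadic 0 := mod_cast IsDyadic.intCast 0

protected lemma one : IsDyadic 1 := mod_cast IsDyadic.intCast 1

protected lemma neg (hx : IsDyadic x) : IsDyadic (-x) := by
  obtain ⟨a, b, rfl⟩ := hx
  exact ⟨-a, b, by push_cast; ring⟩

protected lemma add (hx : IsDyadic x) (hy : IsDyadic y) : IsDyadic (x + y) := by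
  obtain ⟨a, b, rfl⟩ := hx
  obtain ⟨c, d, rfl⟩ := hy
  refine ⟨a * 2 ^ d + c * 2 ^ b, b + d, ?_⟩
  push_cast
  rw [pow_add]
  field_simp

protected lemma sub (hx : IsDyadic x) (hy : IsDyadic y) : IsDyadic (x - y) :=
  sub_eq_add_neg x y ▸ hx.add hy.neg

lemma two_zpow_mul (k : ℤ) (hx : IsDyadic x) : IsDyadic ((2 : ℝ) ^ k * x) := by
  obtain ⟨a, b, rfl⟩ := hx
  obtain ⟨n, rfl | rfl⟩ := k.eq_nat_or_neg
  · exact ⟨2 ^ n * a, b, by push_cast; rw [zpow_natCast]; ring⟩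
  · exact ⟨a, b + n, by rw [zpow_neg, zpow_natCast, pow_add]; field_simp⟩

end IsDyadic

lemma isDyadic_two_zpow_mul_add_iff (k : ℤ) {x c : ℝ} (hc : IsDyadic c) :
    IsDyadic ((2 : ℝ) ^ k * x + c) ↔ IsDyadic x := by
  refine ⟨fun h => ?_, fun h => (h.two_zpow_mul k).add hc⟩
  have hx := (h.sub hc).two_zpow_mul (-k)
  rwa [add_sub_cancel_right, zpow_neg, inv_mul_cancel_left₀ (by positivity)] at hx

/-! ### Dyadic piecewise linear homeomorphisms of the line -/

/-- The germ of `F` along the filter `l` is that of an affine map with slope a power of `2` and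
dyadic constant term. The filter is `𝓟 s` for the restriction to a set `s`, and `𝓝 x`, `𝓝[≥] x` or
`𝓝[≤] x` for a two-sided or one-sided germ. -/
def IsDyadicAffineAlong (F : ℝ → ℝ) (l : Filter ℝ) : Prop :=
  ∃ k : ℤ, ∃ c : ℝ, IsDyadic c ∧ ∀ᶠ y in l, F y = (2 : ℝ) ^ k * y + c

namespace IsDyadicAffineAlong

variable {F G : ℝ → ℝ} {l l' : Filter ℝ}

lemma mono (h : IsDyadicAffineAlong F l) (hl : l' ≤ l) : IsDyadicAffineAlong F l' := by
  obtain ⟨k, c, hc, h⟩ := h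
  exact ⟨k, c, hc, hl h⟩

lemma congr (h : IsDyadicAffineAlong F l) (hl : G =ᶠ[l] F) : IsDyadicAffineAlong G l := by
  obtain ⟨k, c, hc, h⟩ := h
  exact ⟨k, c, hc, hl.trans h⟩

lemma comp (hG : IsDyadicAffineAlong G l') (hF : IsDyadicAffineAlong F l) (ht : Tendsto F l l') :
    IsDyadicAffineAlong (G ∘ F) l := by
  obtain ⟨k, c, hc, hF⟩ := hF
  obtain ⟨j, d, hd, hG⟩ := hG
  refine ⟨j + k, 2 ^ j * c + d, (hc.two_zpow_mul j).add hd, ?_⟩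
  filter_upwards [hF, ht.eventually hG] with y hFy hGy
  rw [comp_apply, hGy, hFy, zpow_add₀ two_ne_zero]
  ring

lemma of_rightInverse (hF : IsDyadicAffineAlong F l) (hGF : RightInverse G F)
    (ht : Tendsto G l' l) : IsDyadicAffineAlong G l' := by
  obtain ⟨k, c, hc, hF⟩ := hF
  refine ⟨-k, -(2 ^ (-k) * c), (hc.two_zpow_mul (-k)).neg, ?_⟩
  filter_upwards [ht.eventually hF] with y hy
  have hGy : (2 : ℝ) ^ k * G y = y - c := by rw [hGF y] at hy; linarith
  rw [← inv_mul_cancel_left₀ (by positivity : (2 : ℝ) ^ k ≠ 0) (G y), hGy, zpow_neg]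
  ring

end IsDyadicAffineAlong

/-- The local form of the piecewise linear maps in Thompson's groups: slopes are powers of `2` and
breakpoints have dyadic coordinates. Breakpoints may accumulate only at infinity. -/
structure IsDyadicPL (F : ℝ → ℝ) : Prop where
  right : ∀ x, IsDyadicAffineAlong F (𝓝[≥] x)
  left : ∀ x, IsDyadicAffineAlong F (𝓝[≤] x)
  nhds : ∀ x, ¬ IsDyadic x → IsDyadicAffineAlong F (𝓝 x)

namespace IsDyadicPL

variable {F : ℝ → ℝ}

lemma isDyadic_apply_iff (hF : IsDyadicPL F) (x : ℝ) : IsDyadic (F x) ↔ IsDyadic x := by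
  obtain ⟨k, c, hc, h⟩ := hF.right x
  rw [h.self_of_nhdsWithin self_mem_Ici, isDyadic_two_zpow_mul_add_iff k hc]

protected lemma affine (k : ℤ) {c : ℝ} (hc : IsDyadic c) :
    IsDyadicPL fun x => (2 : ℝ) ^ k * x + c := by
  have along (l : Filter ℝ) : IsDyadicAffineAlong (fun x => (2 : ℝ) ^ k * x + c) l :=
    ⟨k, c, hc, .of_forall fun _ => rfl⟩
  exact ⟨fun _ => along _, fun _ => along _, fun _ _ => along _⟩

lemma of_eqOn_Icc
    (hright : ∀ x, ∃ a b, IsDyadic a ∧ x ∈ Ico a b ∧ ∃ G, IsDyadicPL G ∧ EqOn F G (Icc a b))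
    (hleft : ∀ x, ∃ a b, x ∈ Ioc a b ∧ ∃ G, IsDyadicPL G ∧ EqOn F G (Icc a b)) :
    IsDyadicPL F where
  right x := by
    obtain ⟨a, b, -, hx, G, hG, hFG⟩ := hright x
    exact (hG.right x).congr (hFG.eventuallyEq_of_mem (Icc_mem_nhdsGE_of_mem hx))
  left x := by
    obtain ⟨a, b, hx, G, hG, hFG⟩ := hleft x
    exact (hG.left x).congr (hFG.eventuallyEq_of_mem (Icc_mem_nhdsLE_of_mem hx))
  nhds x hx := by
    obtain ⟨a, b, ha, hxab, G, hG, hFG⟩ := hright x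
    have hax : a < x := hxab.1.lt_of_ne fun h => hx (h ▸ ha)
    exact (hG.nhds x hx).congr (hFG.eventuallyEq_of_mem (Icc_mem_nhds hax hxab.2))

end IsDyadicPL

section MonotoneGerms

variable {α β : Type*} [TopologicalSpace α] [Preorder α] [TopologicalSpace β] [Preorder β]
  {f : α → β} {x : α}

lemma tendsto_nhdsGE_of_monotone (hf : Monotone f) (hc : ContinuousAt f x) :
    Tendsto f (𝓝[≥] x) (𝓝[≥] f x) :=
  hc.continuousWithinAt.tendsto_nhdsWithin fun _ hy => hf hy

lemma tendsto_nhdsLE_of_monotone (hf : Monotone f) (hc : ContinuousAt f x) :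
    Tendsto f (𝓝[≤] x) (𝓝[≤] f x) :=
  hc.continuousWithinAt.tendsto_nhdsWithin fun _ hy => hf hy

end MonotoneGerms

namespace IsDyadicPL

protected lemma mul {F G : ℝ ≃o ℝ} (hF : IsDyadicPL F) (hG : IsDyadicPL G) :
    IsDyadicPL ⇑(F * G) where
  right x := (hF.right _).comp (hG.right x)
    (tendsto_nhdsGE_of_monotone G.monotone G.continuous.continuousAt)
  left x := (hF.left _).comp (hG.left x)
    (tendsto_nhdsLE_of_monotone G.monotone G.continuous.continuousAt)
  nhds x hx := (hF.nhds _ ((hG.isDyadic_apply_iff x).not.2 hx)).comp (hG.nhds x hx)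
    G.continuous.continuousAt

protected lemma inv {F : ℝ ≃o ℝ} (hF : IsDyadicPL F) : IsDyadicPL ⇑F⁻¹ where
  right x := (hF.right _).of_rightInverse F.apply_symm_apply
    (tendsto_nhdsGE_of_monotone F.symm.monotone F.symm.continuous.continuousAt)
  left x := (hF.left _).of_rightInverse F.apply_symm_apply
    (tendsto_nhdsLE_of_monotone F.symm.monotone F.symm.continuous.continuousAt)
  nhds x hx := by
    have hx' : ¬ IsDyadic (F.symm x) := by
      rwa [← hF.isDyadic_apply_iff, F.apply_symm_apply]
    exact (hF.nhds _ hx').of_rightInverse F.apply_symm_apply F.symm.continuous.continuousAt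

end IsDyadicPL

/-- The group of dyadic piecewise linear homeomorphisms of the line. Its elements need not commute
with the unit translation: it also contains the maps conjugating that translation to its roots. -/
def dyadicPLGroup : Subgroup (ℝ ≃o ℝ) where
  carrier := {F | IsDyadicPL F}
  one_mem' := by
    have h : IsDyadicPL fun x => (2 : ℝ) ^ (0 : ℤ) * x + 0 := .affine 0 .zero
    simpa using! h
  mul_mem' := IsDyadicPL.mul
  inv_mem' := IsDyadicPL.inv

lemma mem_dyadicPLGroup {F : ℝ ≃o ℝ} : F ∈ dyadicPLGroup ↔ IsDyadicPL F := Iff.rfl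

lemma addRight_mem_dyadicPLGroup {c : ℝ} (hc : IsDyadic c) :
    OrderIso.addRight c ∈ dyadicPLGroup := by
  simpa [mem_dyadicPLGroup] using! IsDyadicPL.affine 0 hc

lemma mulLeft₀_two_zpow_mem_dyadicPLGroup (k : ℤ) :
    OrderIso.mulLeft₀ ((2 : ℝ) ^ k) (by positivity) ∈ dyadicPLGroup := by
  simpa [mem_dyadicPLGroup] using! IsDyadicPL.affine k .zero

/-- The homeomorphism of the line that is the identity to the left of `a` and doubles distances
from `a` to the right of `a`. -/
noncomputable def doubleAfter (a : ℝ) : ℝ ≃o ℝ :=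
  StrictMono.orderIsoOfRightInverse (fun x => max x (2 * x - a))
    (fun x y h => max_lt_max h (by linarith))
    (fun y => min y ((y + a) / 2)) fun y => by
      rcases le_total y a with h | h
      · simp only [min_eq_left (by linarith : y ≤ (y + a) / 2)]
        exact max_eq_left (by linarith)
      · simp only [min_eq_right (by linarith : (y + a) / 2 ≤ y)]
        rw [max_eq_right (by linarith)]
        ring

lemma doubleAfter_of_le {a x : ℝ} (h : x ≤ a) : doubleAfter a x = x :=
  max_eq_left (by linarith)

lemma doubleAfter_of_ge {a x : ℝ} (h : a ≤ x) : doubleAfter a x = 2 * x - a :=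
  max_eq_right (by linarith)

lemma doubleAfter_mem_dyadicPLGroup {a : ℝ} (ha : IsDyadic a) :
    doubleAfter a ∈ dyadicPLGroup := by
  have before (b : ℝ) :
      ∃ G, IsDyadicPL G ∧ EqOn (doubleAfter a) G (Icc b a) :=
    ⟨_, .affine 0 .zero, fun y hy => by simp [doubleAfter_of_le hy.2]⟩
  have after (b : ℝ) :
      ∃ G, IsDyadicPL G ∧ EqOn (doubleAfter a) G (Icc a b) :=
    ⟨_, .affine 1 ha.neg, fun y hy => by simp [doubleAfter_of_ge hy.1, sub_eq_add_neg]⟩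
  refine IsDyadicPL.of_eqOn_Icc (fun x => ?_) fun x => ?_
  · rcases lt_or_ge x a with h | h
    · exact ⟨⌊x⌋, a, .intCast _, ⟨Int.floor_le x, h⟩, before _⟩
    · exact ⟨a, x + 1, ha, ⟨h, lt_add_one x⟩, after _⟩
  · rcases le_or_gt x a with h | h
    · exact ⟨x - 1, a, ⟨sub_one_lt x, h⟩, before _⟩
    · exact ⟨a, x, ⟨h, le_rfl⟩, after _⟩

lemma exists_mem_dyadicPLGroup_apply_one_eq_natCast {n : ℕ} (hn : 0 < n) :
    ∃ φ ∈ dyadicPLGroup, φ 0 = 0 ∧ φ 1 = n := by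
  induction n, hn using Nat.le_induction with
  | base => exact ⟨1, one_mem _, by simp⟩
  | succ n hn ih =>
    -- Doubling the last unit interval stretches `[0, n]` to `[0, n + 1]`.
    obtain ⟨φ, hφ, h0, h1⟩ := ih
    have hd : IsDyadic ((n : ℝ) - 1) := mod_cast IsDyadic.intCast ((n : ℤ) - 1)
    have hn' : (1 : ℝ) ≤ n := mod_cast hn
    refine ⟨doubleAfter (n - 1) * φ, mul_mem (doubleAfter_mem_dyadicPLGroup hd) hφ, ?_, ?_⟩
    · rw [RelIso.mul_apply, h0, doubleAfter_of_le (by linarith)]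
    · rw [RelIso.mul_apply, h1, doubleAfter_of_ge (by linarith)]
      push_cast
      ring

lemma exists_mem_dyadicPLGroup_apply_one_eq {b : ℝ} (hb : IsDyadic b) (hpos : 0 < b) :
    ∃ φ ∈ dyadicPLGroup, φ 0 = 0 ∧ φ 1 = b := by
  obtain ⟨a, n, rfl⟩ := hb
  have ha : 0 < a := by
    rwa [div_pos_iff_of_pos_right (by positivity), Int.cast_pos] at hpos
  lift a to ℕ using ha.le
  obtain ⟨φ, hφ, h0, h1⟩ := exists_mem_dyadicPLGroup_apply_one_eq_natCast (Int.natCast_pos.1 ha)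
  refine ⟨_ * φ, mul_mem (mulLeft₀_two_zpow_mem_dyadicPLGroup (-n)) hφ, ?_, ?_⟩
  · simp [h0]
  · simp [h1, div_eq_inv_mul]

/-! ### Conjugation to the unit translation -/

section Orbit

variable {α : Type*}

lemma not_bddAbove_range_zpow_apply [ConditionallyCompleteLinearOrder α] {u : α ≃o α}
    (hu : ∀ x, x < u x) (x : α) : ¬ BddAbove (range fun n : ℤ => (u ^ n) x) := by
  intro hb
  refine (hu (sSup (range fun n : ℤ => (u ^ n) x))).not_ge ?_
  rw [u.map_csSup' (range_nonempty _) hb]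
  refine csSup_le_csSup hb ((range_nonempty _).image _) ?_
  rintro _ ⟨_, ⟨n, rfl⟩, rfl⟩
  exact ⟨1 + n, by simp only [zpow_one_add, RelIso.mul_apply]⟩

lemma not_bddBelow_range_zpow_apply [ConditionallyCompleteLinearOrder α] {u : α ≃o α}
    (hu : ∀ x, x < u x) (x : α) : ¬ BddBelow (range fun n : ℤ => (u ^ n) x) := by
  intro hb
  have hu' (y : α) : u⁻¹ y < y := by simpa using hu (u⁻¹ y)
  refine (hu' (sInf (range fun n : ℤ => (u ^ n) x))).not_ge ?_
  rw [u⁻¹.map_csInf' (range_nonempty _) hb]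
  refine csInf_le_csInf hb ((range_nonempty _).image _) ?_
  rintro _ ⟨_, ⟨n, rfl⟩, rfl⟩
  exact ⟨-1 + n, by simp only [zpow_add, zpow_neg_one, RelIso.mul_apply]⟩

lemma strictMono_zpow_apply [Preorder α] {u : α ≃o α} {x : α} (hx : x < u x) :
    StrictMono fun n : ℤ => (u ^ n) x :=
  strictMono_int_of_lt_succ fun n => by
    rw [zpow_add_one, RelIso.mul_apply]
    exact (u ^ n).strictMono hx

lemma exists_mem_Ico_of_strictMono_int [LinearOrder α] {f : ℤ → α} (hf : StrictMono f)
    (hb : ¬ BddBelow (range f)) (ha : ¬ BddAbove (range f)) (y : α) :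
    ∃ n, y ∈ Ico (f n) (f (n + 1)) := by
  obtain ⟨_, ⟨a, rfl⟩, hay⟩ := not_bddBelow_iff.1 hb y
  obtain ⟨_, ⟨b, rfl⟩, hyb⟩ := not_bddAbove_iff.1 ha y
  obtain ⟨n, hn, hmax⟩ := Int.exists_greatest_of_bdd (P := fun n => f n ≤ y)
    ⟨b, fun z hz => (hf.lt_iff_lt.1 (hz.trans_lt hyb)).le⟩ ⟨a, hay.le⟩
  exact ⟨n, hn, lt_of_not_ge fun h => (hmax (n + 1) h).not_gt (lt_add_one n)⟩

end Orbit

/-- The map equal to `φ` on `[0, 1)` and satisfying `Φ (x + 1) = u (Φ x)`. When `φ 0 = 0` and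
`φ 1 = u 0` it sends `[n, n + 1)` to the fundamental domain `[uⁿ 0, uⁿ⁺¹ 0)` of `u`. -/
noncomputable def equivariantExtension (u φ : ℝ ≃o ℝ) (x : ℝ) : ℝ :=
  (u ^ ⌊x⌋) (φ (Int.fract x))

namespace equivariantExtension

variable {u φ : ℝ ≃o ℝ}

lemma apply_add_one (x : ℝ) :
    equivariantExtension u φ (x + 1) = u (equivariantExtension u φ x) := by
  simp only [equivariantExtension, Int.floor_add_one, Int.fract_add_one, add_comm _ (1 : ℤ),
    zpow_one_add, RelIso.mul_apply]

lemma apply_intCast_add (n : ℤ) {x : ℝ} (hx : x ∈ Ico (0 : ℝ) 1) :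
    equivariantExtension u φ (n + x) = (u ^ n) (φ x) := by
  rw [equivariantExtension, Int.floor_intCast_add, Int.fract_intCast_add,
    Int.floor_eq_zero_iff.2 hx, Int.fract_eq_self.2 hx, add_zero]

lemma apply_mem_Ico (h0 : φ 0 = 0) (h1 : φ 1 = u 0) (x : ℝ) :
    equivariantExtension u φ x ∈ Ico ((u ^ ⌊x⌋) 0) ((u ^ (⌊x⌋ + 1)) 0) := by
  rw [zpow_add_one, RelIso.mul_apply, ← h1]
  nth_rw 1 [← h0]
  exact ⟨(u ^ ⌊x⌋).monotone (φ.monotone (Int.fract_nonneg x)),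
    (u ^ ⌊x⌋).strictMono (φ.strictMono (Int.fract_lt_one x))⟩

lemma eqOn_Icc (h0 : φ 0 = 0) (h1 : φ 1 = u 0) (n : ℤ) :
    EqOn (equivariantExtension u φ) ⇑(u ^ n * φ * OrderIso.addRight (-n : ℝ))
      (Icc n (n + 1)) := by
  intro x hx
  have hshift : (u ^ n * φ * OrderIso.addRight (-n : ℝ)) x = (u ^ n) (φ (x - n)) := rfl
  rw [hshift]
  rcases hx.2.eq_or_lt with rfl | hlt
  · have happly := apply_intCast_add (u := u) (φ := φ) (n + 1) (left_mem_Ico.2 one_pos)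
    rw [Int.cast_add, Int.cast_one, add_zero] at happly
    rw [happly, h0, add_sub_cancel_left, h1, zpow_add_one, RelIso.mul_apply]
  · rw [← apply_intCast_add n ⟨sub_nonneg.2 hx.1, by linarith⟩, add_sub_cancel]

protected lemma strictMono (hu : 0 < u 0) (h0 : φ 0 = 0) (h1 : φ 1 = u 0) :
    StrictMono (equivariantExtension u φ) := by
  intro x y hxy
  rcases (Int.floor_mono hxy.le).lt_or_eq with hlt | heq
  · calc equivariantExtension u φ x
      _ < (u ^ (⌊x⌋ + 1)) 0 := (apply_mem_Ico h0 h1 x).2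
      _ ≤ (u ^ ⌊y⌋) 0 := (strictMono_zpow_apply hu).monotone (Int.add_one_le_iff.2 hlt)
      _ ≤ equivariantExtension u φ y := (apply_mem_Ico h0 h1 y).1
  · have hfract : Int.fract x < Int.fract y := by
      rw [Int.fract, Int.fract, heq]
      exact sub_lt_sub_right hxy _
    rw [equivariantExtension, equivariantExtension, heq]
    exact (u ^ ⌊y⌋).strictMono (φ.strictMono hfract)

protected lemma surjective (hu : ∀ x, x < u x) (h0 : φ 0 = 0) (h1 : φ 1 = u 0) :
    Surjective (equivariantExtension u φ) := by
  intro y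
  obtain ⟨n, hny, hyn⟩ := exists_mem_Ico_of_strictMono_int (strictMono_zpow_apply (hu 0))
    (not_bddBelow_range_zpow_apply hu 0) (not_bddAbove_range_zpow_apply hu 0) y
  obtain ⟨x, rfl⟩ := (u ^ n * φ).surjective y
  rw [RelIso.mul_apply] at hny hyn ⊢
  refine ⟨n + x, apply_intCast_add n ⟨?_, ?_⟩⟩
  · rwa [(u ^ n).le_iff_le, ← h0, φ.le_iff_le] at hny
  · rwa [zpow_add_one, RelIso.mul_apply, (u ^ n).lt_iff_lt, ← h1, φ.lt_iff_lt] at hyn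

protected lemma isDyadicPL (hu : u ∈ dyadicPLGroup) (hφ : φ ∈ dyadicPLGroup) (h0 : φ 0 = 0)
    (h1 : φ 1 = u 0) : IsDyadicPL (equivariantExtension u φ) := by
  have piece (n : ℤ) : ∃ G, IsDyadicPL G ∧
      EqOn (equivariantExtension u φ) G (Icc n (n + 1)) :=
    ⟨_, mul_mem (mul_mem (zpow_mem hu n) hφ) (addRight_mem_dyadicPLGroup (IsDyadic.intCast n).neg),
      eqOn_Icc h0 h1 n⟩
  refine .of_eqOn_Icc
    (fun x => ⟨_, _, .intCast ⌊x⌋, ⟨Int.floor_le x, Int.lt_floor_add_one x⟩, piece ⌊x⌋⟩)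
    fun x => ⟨_, _, ?_, piece (⌈x⌉ - 1)⟩
  rw [Int.cast_sub, Int.cast_one, sub_add_cancel]
  exact ⟨by linarith [Int.ceil_lt_add_one x], Int.le_ceil x⟩

end equivariantExtension

theorem exists_mem_dyadicPLGroup_semiconjBy_addRight_one {u : ℝ ≃o ℝ} (hu : u ∈ dyadicPLGroup)
    (hlt : ∀ x, x < u x) : ∃ Φ ∈ dyadicPLGroup, SemiconjBy Φ (OrderIso.addRight 1) u := by
  have hd : IsDyadic (u 0) := (IsDyadicPL.isDyadic_apply_iff hu 0).2 .zero
  obtain ⟨φ, hφ, h0, h1⟩ := exists_mem_dyadicPLGroup_apply_one_eq hd (hlt 0)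
  exact ⟨(equivariantExtension.strictMono (hlt 0) h0 h1).orderIsoOfSurjective _
    (equivariantExtension.surjective hlt h0 h1),
    equivariantExtension.isDyadicPL hu hφ h0 h1, RelIso.ext equivariantExtension.apply_add_one⟩

/-! ### Dyadic partitions -/

/-- The standard dyadic interval `[k / 2 ^ N, (k + 1) / 2 ^ N]`. For large `N`, a dyadic
piecewise linear map is affine on each of these inside a compact set. -/
def dyadicInterval (N : ℕ) (k : ℤ) : Set ℝ := Icc (k / 2 ^ N : ℝ) ((k + 1) / 2 ^ N)

lemma exists_mem_nhds_eventually_dyadicInterval_subset {x : ℝ} {s : Set ℝ} (hs : s ∈ 𝓝 x) :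
    ∃ t ∈ 𝓝 x, ∀ᶠ N in atTop, ∀ k, (dyadicInterval N k ∩ t).Nonempty →
      dyadicInterval N k ⊆ s := by
  obtain ⟨ε, hε, hball⟩ := Metric.mem_nhds_iff.1 hs
  refine ⟨Metric.ball x (ε / 2), Metric.ball_mem_nhds x (by positivity), ?_⟩
  have hsmall : ∀ᶠ N : ℕ in atTop, (1 / 2 : ℝ) ^ N < ε / 2 :=
    (tendsto_pow_atTop_nhds_zero_of_lt_one (by norm_num) (by norm_num)).eventually_lt_const
      (by positivity)
  filter_upwards [hsmall] with N hN k
  rintro ⟨y, hyk, hyx⟩ z hzk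
  have hlength : ((k : ℝ) + 1) / 2 ^ N - k / 2 ^ N = (1 / 2) ^ N := by rw [one_div_pow]; ring
  refine hball ?_
  calc dist z x
    _ ≤ dist z y + dist y x := dist_triangle z y x
    _ ≤ (1 / 2) ^ N + dist y x := by gcongr; exact hlength ▸ Real.dist_le_of_mem_Icc hzk hyk
    _ < ε / 2 + ε / 2 := add_lt_add hN hyx
    _ = ε := add_halves ε

lemma IsDyadic.eventually_dyadicInterval_subset_Ici_or_Iic {x : ℝ} (hx : IsDyadic x) :
    ∀ᶠ N in atTop, ∀ k, dyadicInterval N k ⊆ Ici x ∨ dyadicInterval N k ⊆ Iic x := by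
  obtain ⟨a, b, rfl⟩ := hx
  filter_upwards [eventually_ge_atTop b] with N hN k
  obtain ⟨j, rfl⟩ := Nat.exists_eq_add_of_le hN
  have hpow : (a : ℝ) / 2 ^ b = (a * 2 ^ j : ℤ) / 2 ^ (b + j) := by
    push_cast
    rw [pow_add, mul_div_mul_right _ _ (by positivity)]
  rw [hpow]
  rcases le_or_gt (a * 2 ^ j) k with hak | hak
  · refine .inl fun y hy => le_trans ?_ hy.1
    gcongr
  · refine .inr fun y hy => hy.2.trans ?_
    gcongr
    exact_mod_cast hak

namespace IsDyadicPL

variable {F : ℝ → ℝ}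

lemma exists_mem_nhds_eventually_affine (hF : IsDyadicPL F) (x : ℝ) :
    ∃ s ∈ 𝓝 x, ∀ᶠ N in atTop, ∀ k, dyadicInterval N k ⊆ s →
      IsDyadicAffineAlong F (𝓟 (dyadicInterval N k)) := by
  by_cases hx : IsDyadic x
  · obtain ⟨p, c, hc, hright⟩ := hF.right x
    obtain ⟨q, d, hd, hleft⟩ := hF.left x
    refine ⟨_, inter_mem (mem_nhdsWithin_iff_eventually.1 hright)
      (mem_nhdsWithin_iff_eventually.1 hleft), ?_⟩
    filter_upwards [hx.eventually_dyadicInterval_subset_Ici_or_Iic] with N hN k hsub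
    rcases hN k with hside | hside
    · exact ⟨p, c, hc, fun y hy => (hsub hy).1 (hside hy)⟩
    · exact ⟨q, d, hd, fun y hy => (hsub hy).2 (hside hy)⟩
  · obtain ⟨p, c, hc, hnhds⟩ := hF.nhds x hx
    exact ⟨_, hnhds, .of_forall fun N k hsub => ⟨p, c, hc, hsub⟩⟩

lemma eventually_affine_dyadicInterval (hF : IsDyadicPL F) {K : Set ℝ} (hK : IsCompact K) :
    ∀ᶠ N in atTop, ∀ k, (dyadicInterval N k ∩ K).Nonempty →
      IsDyadicAffineAlong F (𝓟 (dyadicInterval N k)) := by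
  refine hK.induction_on ?empty ?mono ?union ?nhds
  case empty => simp
  case mono =>
    intro s t hst ht
    filter_upwards [ht] with N hN k hk
    exact hN k (hk.mono (inter_subset_inter_right _ hst))
  case union =>
    intro s t hs ht
    filter_upwards [hs, ht] with N hsN htN k hk
    rw [inter_union_distrib_left, union_nonempty] at hk
    exact hk.elim (hsN k) (htN k)
  case nhds =>
    intro x _
    obtain ⟨s, hs, hsF⟩ := hF.exists_mem_nhds_eventually_affine x
    obtain ⟨t, ht, hts⟩ := exists_mem_nhds_eventually_dyadicInterval_subset hs
    refine ⟨t, mem_nhdsWithin_of_mem_nhds ht, ?_⟩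
    filter_upwards [hsF, hts] with N hN hNs k hk
    exact hN k (hNs k hk)

end IsDyadicPL

section FinPartition

variable {α : Type*} [LinearOrder α] {m : ℕ} {t : Fin (m + 1) → α} {x : α}

lemma exists_mem_Ico_castSucc_succ (h0 : t 0 ≤ x) (hlast : x < t (Fin.last m)) :
    ∃ i : Fin m, x ∈ Ico (t i.castSucc) (t i.succ) := by
  by_contra! h
  have hle (i : Fin (m + 1)) : t i ≤ x :=
    Fin.induction h0 (fun i hi => not_lt.1 fun hlt => h i ⟨hi, hlt⟩) i
  exact (hle (Fin.last m)).not_gt hlast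

lemma exists_mem_Ioc_castSucc_succ (h0 : t 0 < x) (hlast : x ≤ t (Fin.last m)) :
    ∃ i : Fin m, x ∈ Ioc (t i.castSucc) (t i.succ) := by
  by_contra! h
  have hlt (i : Fin (m + 1)) : t i < x :=
    Fin.induction h0 (fun i hi => not_le.1 fun hle => h i ⟨hi, hle⟩) i
  exact (hlt (Fin.last m)).not_ge hlast

end FinPartition

lemma IsDyadicAffineAlong.exists_isDyadicPL_eqOn_add_intCast {F : CircleDeg1Lift} {a b : ℝ}
    (h : IsDyadicAffineAlong F (𝓟 (Icc a b))) (n : ℤ) :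
    ∃ G, IsDyadicPL G ∧ EqOn F G (Icc (a + n) (b + n)) := by
  obtain ⟨k, c, hc, hF⟩ := h
  refine ⟨_, .affine k ((hc.add (.intCast n)).sub ((IsDyadic.intCast n).two_zpow_mul k)),
    fun x hx => ?_⟩
  have hFx : F (x - n) = 2 ^ k * (x - n) + c :=
    hF ⟨le_sub_iff_add_le.2 hx.1, sub_le_iff_le_add.2 hx.2⟩
  rw [F.map_sub_int] at hFx
  linear_combination hFx

lemma isDyadicPL_of_partition {F : CircleDeg1Lift} {m : ℕ} {t : Fin (m + 1) → ℝ}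
    (h0 : t 0 = 0) (h1 : t (Fin.last m) = 1) (ht : ∀ i, IsDyadic (t i))
    (haff : ∀ i : Fin m, IsDyadicAffineAlong F (𝓟 (Icc (t i.castSucc) (t i.succ)))) :
    IsDyadicPL F := by
  refine .of_eqOn_Icc (fun x => ?_) fun x => ?_
  · obtain ⟨i, hi⟩ := exists_mem_Ico_castSucc_succ (t := t) (x := Int.fract x)
      (h0 ▸ Int.fract_nonneg x) (h1 ▸ Int.fract_lt_one x)
    refine ⟨_, _, (ht _).add (.intCast ⌊x⌋), ?_,
      (haff i).exists_isDyadicPL_eqOn_add_intCast ⌊x⌋⟩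
    rwa [← sub_mem_Ico_iff_left]
  · obtain ⟨i, hi⟩ := exists_mem_Ioc_castSucc_succ (t := t) (x := x - (⌈x⌉ - 1 : ℤ))
      (by push_cast; linarith [Int.ceil_lt_add_one x]) (by push_cast; linarith [Int.le_ceil x])
    refine ⟨_, _, ?_, (haff i).exists_isDyadicPL_eqOn_add_intCast (⌈x⌉ - 1)⟩
    rwa [← sub_mem_Ioc_iff_left]

/-! ### Lifts of circle homeomorphisms -/

lemma unitAddCircle_coe_eq_coe_iff {x y : ℝ} :
    (x : UnitAddCircle) = y ↔ ∃ n : ℤ, x = y + n := by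
  rw [← sub_eq_zero, ← AddCircle.coe_sub, AddCircle.coe_eq_zero_iff]
  simp only [zsmul_eq_mul, mul_one, sub_eq_iff_eq_add', eq_comm]

lemma isDyadicPt_coe_iff {x : ℝ} : IsDyadicPt (x : UnitAddCircle) ↔ IsDyadic x := by
  refine ⟨?_, fun hx => ⟨x, hx, rfl⟩⟩
  rintro ⟨y, hy, hyx⟩
  obtain ⟨n, rfl⟩ := unitAddCircle_coe_eq_coe_iff.1 hyx.symm
  exact hy.add (.intCast n)

lemma periodic_coe_comp_circleDeg1Lift (F : CircleDeg1Lift) :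
    Periodic (fun x => (F x : UnitAddCircle)) 1 := fun x => by
  simp only [F.map_add_one, AddCircle.coe_add_period]

lemma continuous_lift_coe_comp_circleDeg1Lift (F : CircleDeg1Liftˣ) :
    Continuous (periodic_coe_comp_circleDeg1Lift F).lift :=
  continuous_coinduced_dom.2
    ((AddCircle.continuous_mk' 1).comp (CircleDeg1Lift.toOrderIso F).continuous)

/-- The homomorphism sending the lift `F` to the homeomorphism of the circle it induces. -/
noncomputable def inducedCircleHomeo :
    CircleDeg1Liftˣ →* (UnitAddCircle ≃ₜ UnitAddCircle) where
  toFun F :=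
    { toFun := (periodic_coe_comp_circleDeg1Lift F).lift
      invFun := (periodic_coe_comp_circleDeg1Lift ↑F⁻¹).lift
      left_inv := by
        rintro ⟨x⟩
        exact congrArg _ (CircleDeg1Lift.units_inv_apply_apply F x)
      right_inv := by
        rintro ⟨x⟩
        exact congrArg _ (CircleDeg1Lift.units_apply_inv_apply F x)
      continuous_toFun := continuous_lift_coe_comp_circleDeg1Lift F
      continuous_invFun := continuous_lift_coe_comp_circleDeg1Lift F⁻¹ }
  map_one' := by ext ⟨x⟩; rfl
  map_mul' F G := by ext ⟨x⟩; rfl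

lemma inducedCircleHomeo_coe (F : CircleDeg1Liftˣ) (x : ℝ) :
    inducedCircleHomeo F (x : UnitAddCircle) = (F x : ℝ) := rfl

lemma isLiftOf_inducedCircleHomeo (F : CircleDeg1Liftˣ) : IsLiftOf (inducedCircleHomeo F) F :=
  ⟨(F : CircleDeg1Lift).map_add_one, inducedCircleHomeo_coe F⟩

lemma IsLiftOf.surjective {f : UnitAddCircle ≃ₜ UnitAddCircle} {F : ℝ → ℝ} (hF : IsLiftOf f F) :
    Surjective F := by
  intro y
  obtain ⟨⟨x⟩, hx⟩ := f.surjective y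
  obtain ⟨n, hn⟩ := unitAddCircle_coe_eq_coe_iff.1 (hx.symm.trans (hF.2 x))
  have hper : Periodic (fun x => F x - x) 1 := fun x => by
    simp only [hF.1]
    ring
  have hshift := hper.int_mul n x
  simp only [mul_one] at hshift
  exact ⟨x + n, by linarith⟩

lemma IsLiftOf.exists_units_circleDeg1Lift {f : UnitAddCircle ≃ₜ UnitAddCircle} {F : ℝ → ℝ}
    (hF : IsLiftOf f F) (hmono : StrictMono F) :
    ∃ G : CircleDeg1Liftˣ, ⇑G = F ∧ inducedCircleHomeo G = f := by
  let G : CircleDeg1Lift := ⟨⟨F, hmono.monotone⟩, hF.1⟩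
  obtain ⟨U, hU⟩ : IsUnit G :=
    CircleDeg1Lift.isUnit_iff_bijective.2 ⟨hmono.injective, hF.surjective⟩
  have hUF : ⇑U = F := congrArg DFunLike.coe hU
  refine ⟨U, hUF, ?_⟩
  ext ⟨x⟩
  exact (inducedCircleHomeo_coe U x).trans (hUF ▸ (hF.2 x).symm)

/-- The preimage of Thompson's group `T` among the lifts of circle homeomorphisms. -/
noncomputable def thompsonLifts : Subgroup CircleDeg1Liftˣ :=
  dyadicPLGroup.comap CircleDeg1Lift.toOrderIso

lemma mem_thompsonLifts {F : CircleDeg1Liftˣ} : F ∈ thompsonLifts ↔ IsDyadicPL F := Iff.rfl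

lemma IsDyadicPL.exists_dyadic_partition {F : ℝ → ℝ} (hF : IsDyadicPL F) :
    ∃ m : ℕ, ∃ t : Fin (m + 1) → ℝ, StrictMono t ∧ t 0 = 0 ∧ t (Fin.last m) = 1 ∧
      (∀ i, IsDyadic (t i)) ∧
      ∀ i : Fin m, IsDyadicAffineAlong F (𝓟 (Icc (t i.castSucc) (t i.succ))) := by
  obtain ⟨N, hN⟩ := (hF.eventually_affine_dyadicInterval (isCompact_Icc (a := 0) (b := 1))).exists
  refine ⟨2 ^ N, fun i => (i : ℕ) / 2 ^ N, fun i j hij => ?_, by simp, by simp,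
    fun i => ⟨(i : ℕ), N, by simp⟩, fun i => ?_⟩
  · simp only
    gcongr
    exact hij
  · have hmeets : ((i : ℕ) / 2 ^ N : ℝ) ∈ dyadicInterval N (i : ℕ) ∩ Icc 0 1 := by
      refine ⟨left_mem_Icc.2 (by gcongr; linarith), by positivity, ?_⟩
      rw [div_le_one (by positivity)]
      exact_mod_cast i.isLt.le
    simpa [dyadicInterval] using hN _ ⟨_, hmeets⟩

lemma inThompsonT_inducedCircleHomeo {F : CircleDeg1Liftˣ} (hF : F ∈ thompsonLifts) :
    InThompsonT (inducedCircleHomeo F) := by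
  rw [mem_thompsonLifts] at hF
  refine ⟨?_, F, (CircleDeg1Lift.toOrderIso F).strictMono, isLiftOf_inducedCircleHomeo F, ?_⟩
  · rintro ⟨x⟩
    exact isDyadicPt_coe_iff.trans ((hF.isDyadic_apply_iff x).symm.trans isDyadicPt_coe_iff.symm)
  · obtain ⟨m, t, hmono, h0, h1, ht, haff⟩ := hF.exists_dyadic_partition
    refine ⟨m, t, hmono, h0, h1, fun i => ⟨ht i, (hF.isDyadic_apply_iff _).2 (ht i)⟩, fun i => ?_⟩
    obtain ⟨k, c, -, h⟩ := haff i
    exact ⟨k, c, h⟩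

lemma exists_mem_thompsonLifts_of_inThompsonT {f : UnitAddCircle ≃ₜ UnitAddCircle}
    (hf : InThompsonT f) : ∃ F ∈ thompsonLifts, inducedCircleHomeo F = f := by
  obtain ⟨-, F, hmono, hlift, m, t, ht, h0, h1, hdyadic, haff⟩ := hf
  obtain ⟨G, rfl, hGf⟩ := hlift.exists_units_circleDeg1Lift hmono
  refine ⟨G, isDyadicPL_of_partition h0 h1 (fun i => (hdyadic i).1) fun i => ?_, hGf⟩
  obtain ⟨k, c, h⟩ := haff i
  have hc : c = G (t i.castSucc) - 2 ^ k * t i.castSucc := by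
    rw [h _ (left_mem_Icc.2 (ht i.castSucc_lt_succ).le), add_sub_cancel_left]
  exact ⟨k, c, hc ▸ (hdyadic _).2.sub ((hdyadic _).1.two_zpow_mul k), h⟩

/-! ### Roots in a torsion-free group -/

section PowersAndKernels

variable {G H : Type*} [Group G] [Group H] {φ : G →* H} {x z : G} {n : ℕ} {k : ℤ}

lemma orderOf_map_eq_of_pow_eq (hker : φ.ker = Subgroup.zpowers z) (hz : ¬ IsOfFinOrder z)
    (hxz : x ^ n = z) : orderOf (φ x) = n := by
  have hx : ¬ IsOfFinOrder x := fun h => hz (hxz ▸ h.pow)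
  refine Nat.dvd_antisymm (orderOf_dvd_of_pow_eq_one ?_) ?_
  · rw [← map_pow, hxz, ← MonoidHom.mem_ker, hker]
    exact Subgroup.mem_zpowers z
  · have hmem : x ^ orderOf (φ x) ∈ φ.ker := by
      rw [MonoidHom.mem_ker, map_pow, pow_orderOf_eq_one]
    rw [hker] at hmem
    obtain ⟨j, hj⟩ := Subgroup.mem_zpowers_iff.1 hmem
    rw [← hxz, ← zpow_natCast, ← zpow_natCast, ← zpow_mul] at hj
    exact Int.natCast_dvd_natCast.1 ⟨j, (injective_zpow_iff_not_isOfFinOrder.2 hx hj).symm⟩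

lemma exists_pow_eq_and_zpow_eq_of_isCoprime (hcomm : Commute x z)
    (hxz : x ^ n = z ^ k) (hco : IsCoprime (n : ℤ) k) :
    ∃ u ∈ Subgroup.closure {x, z}, u ^ n = z ∧ u ^ k = x := by
  obtain ⟨a, b, hab⟩ := hco
  have hxz' : x ^ (n : ℤ) = z ^ k := by rw [zpow_natCast, hxz]
  have hpow (j : ℤ) : (x ^ b * z ^ a) ^ j = x ^ (b * j) * z ^ (a * j) := by
    rw [(hcomm.zpow_zpow b a).mul_zpow, zpow_mul, zpow_mul]
  refine ⟨x ^ b * z ^ a, mul_mem (zpow_mem (Subgroup.subset_closure (by simp)) b)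
    (zpow_mem (Subgroup.subset_closure (by simp)) a), ?_, ?_⟩
  · rw [← zpow_natCast, hpow, mul_comm b, zpow_mul, hxz', ← zpow_mul, ← zpow_add, mul_comm k,
      add_comm, hab, zpow_one]
  · rw [hpow, mul_comm a, zpow_mul z, ← hxz', ← zpow_mul, ← zpow_add, mul_comm (n : ℤ),
      add_comm, hab, zpow_one]

lemma isCoprime_orderOf_map_of_pow_eq_zpow (htf : ∀ g : G, IsOfFinOrder g → g = 1)
    (hcomm : Commute x z) (hz : φ z = 1) (hx : IsOfFinOrder (φ x))
    (hxz : x ^ orderOf (φ x) = z ^ k) : IsCoprime (orderOf (φ x) : ℤ) k := by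
  rw [Int.isCoprime_iff_gcd_eq_one]
  set d := Int.gcd (orderOf (φ x)) k
  have hd : 0 < d := Int.gcd_pos_of_ne_zero_left _ (mod_cast hx.orderOf_pos.ne')
  obtain ⟨m, hm⟩ : d ∣ orderOf (φ x) := Int.natCast_dvd_natCast.1 (Int.gcd_dvd_left _ _)
  obtain ⟨j, hj⟩ : (d : ℤ) ∣ k := Int.gcd_dvd_right _ _
  -- Torsion-freeness forces this `d`-th root of `1` to be trivial, so already `φ x ^ m = 1`.
  have hroot : (x ^ m * z ^ (-j)) ^ d = 1 := by
    rw [((hcomm.pow_left m).zpow_right (-j)).mul_pow, ← pow_mul, mul_comm m, ← hm, hxz,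
      ← zpow_natCast, ← zpow_mul, neg_mul, mul_comm j, ← hj, zpow_neg, mul_inv_cancel]
  have hφm : φ x ^ m = 1 := by
    simpa [hz] using congrArg φ (htf _ (isOfFinOrder_iff_pow_eq_one.2 ⟨d, hd, hroot⟩))
  have hm0 : 0 < m := Nat.pos_of_ne_zero fun h => hx.orderOf_pos.ne' (by rw [hm, h, mul_zero])
  have hle : d * m ≤ 1 * m := by
    rw [one_mul, ← hm]
    exact Nat.le_of_dvd hm0 (orderOf_dvd_of_pow_eq_one hφm)
  exact le_antisymm (Nat.le_of_mul_le_mul_right hle hm0) hd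

theorem exists_pow_eq_and_zpow_eq_of_isOfFinOrder_map (htf : ∀ g : G, IsOfFinOrder g → g = 1)
    (hker : φ.ker = Subgroup.zpowers z) (hcomm : Commute x z) (hx : IsOfFinOrder (φ x)) :
    ∃ n : ℕ, 0 < n ∧ ∃ u ∈ Subgroup.closure {x, z}, u ^ n = z ∧ ∃ k : ℤ, u ^ k = x := by
  have hz : z ∈ φ.ker := hker ▸ Subgroup.mem_zpowers z
  have hmem : x ^ orderOf (φ x) ∈ φ.ker := by
    rw [MonoidHom.mem_ker, map_pow, pow_orderOf_eq_one]
  rw [hker] at hmem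
  obtain ⟨k, hk⟩ := Subgroup.mem_zpowers_iff.1 hmem
  obtain ⟨u, hu, hun, huk⟩ := exists_pow_eq_and_zpow_eq_of_isCoprime hcomm hk.symm
    (isCoprime_orderOf_map_of_pow_eq_zpow htf hcomm hz hx hk.symm)
  exact ⟨_, hx.orderOf_pos, u, hu, hun, k, huk⟩

end PowersAndKernels

/-! ### Roots of the unit translation -/

/-- The translation `x ↦ x + 1`, as a lift of the identity of the circle. -/
noncomputable def unitTranslation : CircleDeg1Liftˣ :=
  CircleDeg1Lift.translate (Multiplicative.ofAdd 1)

lemma unitTranslation_apply (x : ℝ) : unitTranslation x = x + 1 :=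
  add_comm 1 x

lemma unitTranslation_zpow_apply (n : ℤ) (x : ℝ) : (unitTranslation ^ n) x = x + n := by
  rw [unitTranslation, CircleDeg1Lift.translate_zpow, CircleDeg1Lift.translate_apply, mul_one,
    add_comm]

lemma toOrderIso_unitTranslation :
    CircleDeg1Lift.toOrderIso unitTranslation = OrderIso.addRight 1 :=
  RelIso.ext unitTranslation_apply

lemma unitTranslation_mem_thompsonLifts : unitTranslation ∈ thompsonLifts := by
  rw [thompsonLifts, Subgroup.mem_comap, toOrderIso_unitTranslation]
  exact addRight_mem_dyadicPLGroup .one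

lemma commute_unitTranslation (F : CircleDeg1Liftˣ) : Commute F unitTranslation := by
  refine Units.ext (CircleDeg1Lift.ext fun x => ?_)
  simp only [Units.val_mul, CircleDeg1Lift.mul_apply, unitTranslation_apply,
    CircleDeg1Lift.map_add_one]

lemma not_isOfFinOrder_unitTranslation : ¬ IsOfFinOrder unitTranslation := by
  rw [← injective_zpow_iff_not_isOfFinOrder]
  intro m n hmn
  have h : (0 : ℝ) + m = 0 + n := by
    rw [← unitTranslation_zpow_apply, ← unitTranslation_zpow_apply]
    exact congrArg (fun F : CircleDeg1Liftˣ => F 0) hmn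
  simpa using h

lemma ker_inducedCircleHomeo :
    inducedCircleHomeo.ker = Subgroup.zpowers unitTranslation := by
  ext F
  rw [MonoidHom.mem_ker, Subgroup.mem_zpowers_iff]
  constructor
  · intro hF
    have hint (x : ℝ) : ∃ n : ℤ, F x = x + n :=
      unitAddCircle_coe_eq_coe_iff.1 (DFunLike.congr_fun hF (x : UnitAddCircle))
    obtain ⟨n, hn⟩ := hint 0
    refine ⟨n, Units.ext (CircleDeg1Lift.ext fun x => ?_)⟩
    obtain ⟨j, hj⟩ := hint x
    have hlower := (F : CircleDeg1Lift).le_map_of_map_zero x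
    have hupper := (F : CircleDeg1Lift).map_le_of_map_zero x
    have hjn : j = n := by
      refine le_antisymm (Int.lt_add_one_iff.1 ?_) (Int.lt_add_one_iff.1 ?_)
      · have : (j : ℝ) < n + 1 := by linarith [Int.ceil_lt_add_one x]
        exact_mod_cast this
      · have : (n : ℝ) < j + 1 := by linarith [Int.lt_floor_add_one x]
        exact_mod_cast this
    rw [unitTranslation_zpow_apply, hj, hjn]
  · rintro ⟨n, rfl⟩
    ext ⟨x⟩
    exact unitAddCircle_coe_eq_coe_iff.2 ⟨n, unitTranslation_zpow_apply n x⟩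

lemma eq_one_of_isOfFinOrder_circleDeg1Lift {F : CircleDeg1Liftˣ} (hF : IsOfFinOrder F) :
    F = 1 := by
  obtain ⟨n, hn, hFn⟩ := isOfFinOrder_iff_pow_eq_one.1 hF
  refine Units.ext (CircleDeg1Lift.ext fun x => ?_)
  have hiter : (F : CircleDeg1Lift)^[n] x = x := by
    rw [← CircleDeg1Lift.coe_pow, ← Units.val_pow_eq_pow_val, hFn]
    rfl
  simpa using ((F : CircleDeg1Lift).iterate_pos_eq_iff (m := 0) hn).1 (by simpa using hiter)

lemma lt_apply_of_pow_eq_unitTranslation {u : CircleDeg1Liftˣ} {n : ℕ}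
    (hu : u ^ n = unitTranslation) (x : ℝ) : x < u x := by
  have hn : 0 < n := Nat.pos_of_ne_zero fun h =>
    not_isOfFinOrder_unitTranslation (by rw [← hu, h, pow_zero]; exact .one)
  have hiter : (u : CircleDeg1Lift)^[n] x = x + 1 := by
    rw [← CircleDeg1Lift.coe_pow, ← Units.val_pow_eq_pow_val, hu, unitTranslation_apply]
  simpa using ((u : CircleDeg1Lift).lt_iterate_pos_iff (m := 0) hn).1 (by simp [hiter])

lemma toOrderIso_injective : Injective CircleDeg1Lift.toOrderIso := fun _ _ h =>
  Units.ext (CircleDeg1Lift.ext fun x => DFunLike.congr_fun h x)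

lemma exists_toOrderIso_eq_of_commute {Φ : ℝ ≃o ℝ} (h : Commute Φ (OrderIso.addRight 1)) :
    ∃ F, CircleDeg1Lift.toOrderIso F = Φ := by
  let F : CircleDeg1Lift := ⟨⟨Φ, Φ.monotone⟩, DFunLike.congr_fun h⟩
  obtain ⟨U, hU⟩ : IsUnit F := CircleDeg1Lift.isUnit_iff_bijective.2 Φ.bijective
  exact ⟨U, RelIso.ext fun x => DFunLike.congr_fun hU x⟩

lemma exists_mem_thompsonLifts_pow_eq_unitTranslation {n : ℕ} (hn : 0 < n) :
    ∃ C ∈ thompsonLifts, C ^ n = unitTranslation := by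
  set τ : ℝ ≃o ℝ := OrderIso.addRight 1
  have hlt (x : ℝ) : x < (unitTranslation ^ n) x := by
    rw [← zpow_natCast, unitTranslation_zpow_apply]
    exact lt_add_of_pos_right x (mod_cast hn)
  obtain ⟨Φ, hΦ, hΦτ⟩ := exists_mem_dyadicPLGroup_semiconjBy_addRight_one
    (pow_mem unitTranslation_mem_thompsonLifts n) hlt
  rw [map_pow, toOrderIso_unitTranslation] at hΦτ
  have hroot : (Φ⁻¹ * τ * Φ) ^ n = τ := by
    have hconj : SemiconjBy Φ (Φ⁻¹ * τ * Φ) τ := by rw [SemiconjBy]; group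
    exact mul_left_cancel ((hconj.pow_right n).eq.trans hΦτ.eq.symm)
  obtain ⟨C, hC⟩ := exists_toOrderIso_eq_of_commute (hroot ▸ Commute.self_pow (Φ⁻¹ * τ * Φ) n)
  refine ⟨C, ?_, toOrderIso_injective ?_⟩
  · rw [thompsonLifts, Subgroup.mem_comap, hC]
    exact mul_mem (mul_mem (inv_mem hΦ) (addRight_mem_dyadicPLGroup IsDyadic.one)) hΦ
  · rw [map_pow, hC, hroot, toOrderIso_unitTranslation]

lemma exists_mem_thompsonLifts_semiconjBy {C u : CircleDeg1Liftˣ} (hC : C ∈ thompsonLifts)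
    (hu : u ∈ thompsonLifts) {n : ℕ} (hCn : C ^ n = unitTranslation)
    (hun : u ^ n = unitTranslation) : ∃ h ∈ thompsonLifts, SemiconjBy h C u := by
  obtain ⟨Φ, hΦ, hΦu⟩ := exists_mem_dyadicPLGroup_semiconjBy_addRight_one hu
    (lt_apply_of_pow_eq_unitTranslation hun)
  obtain ⟨Ψ, hΨ, hΨC⟩ := exists_mem_dyadicPLGroup_semiconjBy_addRight_one hC
    (lt_apply_of_pow_eq_unitTranslation hCn)
  have hconj := hΦu.mul_left hΨC.inv_symm_left
  have hcomm := hconj.pow_right n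
  rw [← map_pow, ← map_pow, hCn, hun, toOrderIso_unitTranslation] at hcomm
  obtain ⟨h, hh⟩ := exists_toOrderIso_eq_of_commute hcomm
  refine ⟨h, ?_, toOrderIso_injective ?_⟩
  · rw [thompsonLifts, Subgroup.mem_comap, hh]
    exact mul_mem hΦ (inv_mem hΨ)
  · rw [map_mul, map_mul, hh, hconj.eq]

/-- (Burillo–Cleary–Stein–Taback) There is a sequence `(c n)` of elements of Thompson's
group `T` such that for every `n ≥ 1` the element `c n` lies in `T` and has order
exactly `n`, and every torsion element of `T` is conjugate in `T` to a power of some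
`c n`. -/
theorem thompsonT_torsion_classification :
    ∃ c : ℕ → (AddCircle (1:ℝ) ≃ₜ AddCircle (1:ℝ)),
      (∀ n : ℕ, 1 ≤ n → InThompsonT (c n) ∧ orderOf (c n) = n) ∧
      ∀ f : AddCircle (1:ℝ) ≃ₜ AddCircle (1:ℝ), InThompsonT f → IsOfFinOrder f →
        ∃ n : ℕ, 1 ≤ n ∧ ∃ k : ℤ, ∃ h : AddCircle (1:ℝ) ≃ₜ AddCircle (1:ℝ),
          InThompsonT h ∧ h⁻¹ * f * h = c n ^ k := by
  choose! C hC hCn using fun n (hn : 0 < n) => exists_mem_thompsonLifts_pow_eq_unitTranslation hn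
  refine ⟨fun n => inducedCircleHomeo (C n), fun n hn => ⟨inThompsonT_inducedCircleHomeo (hC n hn),
    orderOf_map_eq_of_pow_eq ker_inducedCircleHomeo not_isOfFinOrder_unitTranslation (hCn n hn)⟩,
    fun f hf hfin => ?_⟩
  obtain ⟨F, hF, rfl⟩ := exists_mem_thompsonLifts_of_inThompsonT hf
  obtain ⟨n, hn, u, hu, hun, k, huF⟩ := exists_pow_eq_and_zpow_eq_of_isOfFinOrder_map
    (fun _ => eq_one_of_isOfFinOrder_circleDeg1Lift) ker_inducedCircleHomeo
    (commute_unitTranslation F) hfin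
  have hclosure : Subgroup.closure {F, unitTranslation} ≤ thompsonLifts :=
    (Subgroup.closure_le _).2 (pair_subset hF unitTranslation_mem_thompsonLifts)
  obtain ⟨h, hh, hconj⟩ :=
    exists_mem_thompsonLifts_semiconjBy (hC n hn) (hclosure hu) (hCn n hn) hun
  refine ⟨n, hn, k, inducedCircleHomeo h, inThompsonT_inducedCircleHomeo hh, ?_⟩
  rw [← huF, ← map_zpow, ← map_inv, ← map_mul, ← map_mul, mul_assoc, ← (hconj.zpow_right k).eq,
    inv_mul_cancel_left]
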